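/- arXiv:2007.12954 — 4 statements merged into one kernel-verified Lean document; each statement's English description precedes it below -/
import Mathlib

section
/- For every unit vector ψ in ℂ²⊗ℂ², the sum over the three Pauli matrices of the variances of the collective operators satisfies Σ_{i=1}^{3} Var_ψ(σᵢ⊗I + I⊗σᵢ) ≤ 8. (This is the pure-state case of Lemma 2.) -/
/-!
Dropping the squared expectations only increases the left-hand side, so it suffices to bound
`⟨ψ, (∑ Aᵢ²) ψ⟩`. Here `∑ Aᵢ²` is four times the Casimir operator of two spin-1/2 particles: it
equals `8` on the triplet space and `0` on the singlet `e₀₁ - e₁₀`. Hence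
`⟨ψ, (∑ Aᵢ²) ψ⟩ = 8‖ψ‖² - 4|ψ₀₁ - ψ₁₀|² ≤ 8`.
-/

open Matrix Complex
open scoped Matrix Kronecker

/-- Expectation value ⟨ψ, A ψ⟩ (real part) of an observable `A` in the vector state `ψ`. -/
noncomputable def expVal {n : Type*} [Fintype n] (ψ : n → ℂ) (A : Matrix n n ℂ) : ℝ :=
  (star ψ ⬝ᵥ A.mulVec ψ).re

/-- Variance Var_ψ(A) = ⟨ψ, A²ψ⟩ − ⟨ψ, Aψ⟩². -/
noncomputable def Var {n : Type*} [Fintype n] (ψ : n → ℂ) (A : Matrix n n ℂ) : ℝ :=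
  expVal ψ (A * A) - (expVal ψ A) ^ 2

/-- The three Pauli matrices. -/
noncomputable def pauli : Fin 3 → Matrix (Fin 2) (Fin 2) ℂ :=
  ![!![0, 1; 1, 0], !![0, -Complex.I; Complex.I, 0], !![1, 0; 0, -1]]

/-- The expectation of `∑ Aᵢ²` is `8‖ψ‖²` minus `8` times the weight of `ψ` on the
normalized singlet `(e₀₁ - e₁₀)/√2`. -/
lemma sum_expVal_collective_sq (ψ : Fin 2 × Fin 2 → ℂ) :
    ∑ i : Fin 3,
      expVal ψ ((pauli i ⊗ₖ (1 : Matrix (Fin 2) (Fin 2) ℂ) +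
             (1 : Matrix (Fin 2) (Fin 2) ℂ) ⊗ₖ pauli i) *
             (pauli i ⊗ₖ (1 : Matrix (Fin 2) (Fin 2) ℂ) +
             (1 : Matrix (Fin 2) (Fin 2) ℂ) ⊗ₖ pauli i)) =
      8 * (star ψ ⬝ᵥ ψ).re - 4 * Complex.normSq (ψ (0, 1) - ψ (1, 0)) := by
  simp only [Fin.sum_univ_three, expVal, ← Matrix.mulVec_mulVec]
  simp [pauli, Matrix.mulVec, dotProduct, Fintype.sum_prod_type, Complex.normSq_apply]
  ring

theorem collective_pauli_variance_sum_le_eight (ψ : Fin 2 × Fin 2 → ℂ)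
    (hψ : star ψ ⬝ᵥ ψ = 1) :
    ∑ i : Fin 3,
      Var ψ (pauli i ⊗ₖ (1 : Matrix (Fin 2) (Fin 2) ℂ) +
             (1 : Matrix (Fin 2) (Fin 2) ℂ) ⊗ₖ pauli i) ≤ 8 := by
  refine (Finset.sum_le_sum fun i _ => sub_le_self _ (sq_nonneg _)).trans ?_
  rw [sum_expVal_collective_sq, hψ, Complex.one_re]
  linarith [Complex.normSq_nonneg (ψ (0, 1) - ψ (1, 0))]
end

section
/- For every unit vector ψ in ℂ²⊗ℂ², with Bloch coefficients rᵢ = ⟨ψ, (σᵢ⊗I)ψ⟩, sᵢ = ⟨ψ, (I⊗σᵢ)ψ⟩ and correlation tensor t_{ij} = ⟨ψ, (σᵢ⊗σⱼ)ψ⟩, one has the identity (t₁₁ + t₂₂)² + (t₁₂ − t₂₁)² = (1 − t₃₃)² − (r₃ − s₃)². -/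
/-!
Write `ψ = (a, b, c, d)` in the product basis `|00⟩, |01⟩, |10⟩, |11⟩`. All the quantities involved
only see the block spanned by `|01⟩` and `|10⟩`: with `z = conj b * c` one finds
`t₁₁ + t₂₂ = 4 Re z`, `t₁₂ - t₂₁ = -4 Im z`, `r₃ - s₃ = 2 (|b|² - |c|²)` and, using `‖ψ‖ = 1`,
`1 - t₃₃ = 2 (|b|² + |c|²)`. Both sides of the identity therefore equal `16 |b|² |c|²`.
-/

open Matrix Complex
open scoped Matrix Kronecker

/-- Bloch coefficient r_i = ⟨ψ, (σ_i ⊗ I) ψ⟩ of a two-qubit pure state. -/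
noncomputable def blochA (ψ : Fin 2 × Fin 2 → ℂ) (i : Fin 3) : ℝ :=
  expVal ψ (pauli i ⊗ₖ (1 : Matrix (Fin 2) (Fin 2) ℂ))

/-- Bloch coefficient s_i = ⟨ψ, (I ⊗ σ_i) ψ⟩ of a two-qubit pure state. -/
noncomputable def blochB (ψ : Fin 2 × Fin 2 → ℂ) (i : Fin 3) : ℝ :=
  expVal ψ ((1 : Matrix (Fin 2) (Fin 2) ℂ) ⊗ₖ pauli i)

/-- Correlation tensor t_{ij} = ⟨ψ, (σ_i ⊗ σ_j) ψ⟩ of a two-qubit pure state. -/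
noncomputable def corr (ψ : Fin 2 × Fin 2 → ℂ) (i j : Fin 3) : ℝ :=
  expVal ψ (pauli i ⊗ₖ pauli j)

theorem corr_diag_sum (ψ : Fin 2 × Fin 2 → ℂ) :
    corr ψ 0 0 + corr ψ 1 1 = 4 * (star (ψ (0, 1)) * ψ (1, 0)).re := by
  simp [corr, expVal, pauli, dotProduct, Matrix.mulVec, Fintype.sum_prod_type, Fin.sum_univ_two,
    Matrix.kroneckerMap_apply]
  ring

theorem corr_antisymm (ψ : Fin 2 × Fin 2 → ℂ) :
    corr ψ 0 1 - corr ψ 1 0 = -4 * (star (ψ (0, 1)) * ψ (1, 0)).im := by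
  simp [corr, expVal, pauli, dotProduct, Matrix.mulVec, Fintype.sum_prod_type, Fin.sum_univ_two,
    Matrix.kroneckerMap_apply]
  ring

theorem bloch_diff (ψ : Fin 2 × Fin 2 → ℂ) :
    blochA ψ 2 - blochB ψ 2 = 2 * (Complex.normSq (ψ (0, 1)) - Complex.normSq (ψ (1, 0))) := by
  simp [blochA, blochB, expVal, pauli, dotProduct, Matrix.mulVec, Fintype.sum_prod_type,
    Fin.sum_univ_two, Matrix.kroneckerMap_apply, Matrix.one_apply, Complex.normSq_apply]
  ring

/-- Normalization enters only here: `t₃₃ = |a|² + |d|² - |b|² - |c|²` is subtracted from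
`1 = |a|² + |b|² + |c|² + |d|²`. -/
theorem one_sub_corr (ψ : Fin 2 × Fin 2 → ℂ) (hψ : star ψ ⬝ᵥ ψ = 1) :
    1 - corr ψ 2 2 = 2 * (Complex.normSq (ψ (0, 1)) + Complex.normSq (ψ (1, 0))) := by
  have h := congrArg Complex.re hψ
  simp [dotProduct, Fintype.sum_prod_type, Fin.sum_univ_two] at h
  simp [corr, expVal, pauli, dotProduct, Matrix.mulVec, Fintype.sum_prod_type, Fin.sum_univ_two,
    Matrix.kroneckerMap_apply, Complex.normSq_apply]
  linarith

theorem pure_two_qubit_correlation_identity (ψ : Fin 2 × Fin 2 → ℂ)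
    (hψ : star ψ ⬝ᵥ ψ = 1) :
    (corr ψ 0 0 + corr ψ 1 1) ^ 2 + (corr ψ 0 1 - corr ψ 1 0) ^ 2 =
      (1 - corr ψ 2 2) ^ 2 - (blochA ψ 2 - blochB ψ 2) ^ 2 := by
  rw [corr_diag_sum, corr_antisymm, bloch_diff, one_sub_corr ψ hψ]
  -- `(Re z)² + (Im z)² = |z|²` is multiplicative, so `|conj b * c|² = |b|² |c|²`.
  have h : (star (ψ (0, 1)) * ψ (1, 0)).re ^ 2 + (star (ψ (0, 1)) * ψ (1, 0)).im ^ 2 =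
      Complex.normSq (ψ (0, 1)) * Complex.normSq (ψ (1, 0)) := by
    simp [Complex.normSq_apply]
    ring
  linear_combination 16 * h
end

section
/- (Pure-state version of Theorem 1.) Let d ≥ 2 and let {A_μ}, {B_μ}, {C_μ} be finite families of Hermitian d×d matrices indexed by the same finite set. Suppose F₁, F₂ are real numbers such that: (i) for every unit vector φ ∈ ℂ^d and every X ∈ {A, B, C}, Σ_μ Var_φ(X_μ) ≤ F₁; and (ii) for every unit vector φ ∈ ℂ^d⊗ℂ^d and every ordered pair (X, Y) ∈ {(A,B), (A,C), (B,C)}, Σ_μ Var_φ(X_μ⊗I + I⊗Y_μ) ≤ F₂. Then every unit vector ψ ∈ ℂ^d⊗ℂ^d⊗ℂ^d that factors as a tensor product across some bipartition of the three subsystems (ψ = α⊗β with α ∈ ℂ^d and β ∈ ℂ^d⊗ℂ^d for the bipartition a|bc, and analogously for b|ac and ab|c) satisfies Σ_μ Var_ψ(A_μ⊗I⊗I + I⊗B_μ⊗I + I⊗I⊗C_μ) ≤ F₁ + F₂. -/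
/-!
The variance of a local observable `X ⊗ 1 + 1 ⊗ Y` is additive on product states:
`⟨(X ⊗ 1 + 1 ⊗ Y)²⟩ = ⟨X²⟩ + 2⟨X⟩⟨Y⟩ + ⟨Y²⟩`, and the cross term cancels against the square of the
mean `⟨X⟩ + ⟨Y⟩` (`var_tensor`; Hermiticity makes `⟨X⟩` and `⟨Y⟩` real). The two factors of a unit
product vector can be rescaled to be unit vectors, so uniform bounds on the two factors add up
(`sum_var_le_of_product`). For each bipartition of the three parties, the generator
`A ⊗ 1 ⊗ 1 + 1 ⊗ B ⊗ 1 + 1 ⊗ 1 ⊗ C` is of this local form with one single-party factor (bounded by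
`F₁`) and one two-party factor (bounded by `F₂`), after a permutation of the tensor factors, which
leaves variances unchanged (`var_comp_equiv`).
-/

open Matrix Complex
open scoped Matrix Kronecker

/-- A pure tripartite state is biseparable iff it factors as a tensor product across one of
the bipartitions a|bc, b|ac, ab|c. -/
def PureBiseparable {da db dc : ℕ} (ψ : Fin da × Fin db × Fin dc → ℂ) : Prop :=
  (∃ (α : Fin da → ℂ) (β : Fin db × Fin dc → ℂ), ∀ p, ψ p = α p.1 * β p.2) ∨
  (∃ (β : Fin db → ℂ) (γ : Fin da × Fin dc → ℂ), ∀ p, ψ p = β p.2.1 * γ (p.1, p.2.2)) ∨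
  (∃ (α : Fin da × Fin db → ℂ) (γ : Fin dc → ℂ), ∀ p, ψ p = α (p.1, p.2.1) * γ p.2.2)

section Helpers

variable {m n : Type*} [Fintype m] [Fintype n]

/-- The tensor product `φ ⊗ χ` of two vectors in coordinates. -/
def tensorVec (φ : m → ℂ) (χ : n → ℂ) : m × n → ℂ := fun p => φ p.1 * χ p.2

theorem tensorVec_dotProduct (φ : m → ℂ) (χ : n → ℂ) :
    star (tensorVec φ χ) ⬝ᵥ tensorVec φ χ = (star φ ⬝ᵥ φ) * (star χ ⬝ᵥ χ) := by
  simp only [dotProduct, tensorVec, Fintype.sum_prod_type, Finset.sum_mul_sum, Pi.star_apply,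
    star_mul']
  refine Finset.sum_congr rfl fun i _ => Finset.sum_congr rfl fun j _ => ?_
  ring

theorem kronecker_mulVec_tensorVec (φ : m → ℂ) (χ : n → ℂ) (X : Matrix m m ℂ)
    (Y : Matrix n n ℂ) :
    (X ⊗ₖ Y) *ᵥ tensorVec φ χ = tensorVec (X *ᵥ φ) (Y *ᵥ χ) := by
  ext ⟨i, j⟩
  simp only [mulVec, dotProduct, tensorVec, Fintype.sum_prod_type, Finset.sum_mul_sum,
    kroneckerMap_apply]
  refine Finset.sum_congr rfl fun i _ => Finset.sum_congr rfl fun j _ => ?_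
  ring

theorem tensor_expectation (φ : m → ℂ) (χ : n → ℂ) (X : Matrix m m ℂ) (Y : Matrix n n ℂ) :
    star (tensorVec φ χ) ⬝ᵥ (X ⊗ₖ Y) *ᵥ tensorVec φ χ
      = (star φ ⬝ᵥ X *ᵥ φ) * (star χ ⬝ᵥ Y *ᵥ χ) := by
  rw [kronecker_mulVec_tensorVec]
  simp only [dotProduct, tensorVec, Fintype.sum_prod_type, Finset.sum_mul_sum, Pi.star_apply,
    star_mul']
  refine Finset.sum_congr rfl fun i _ => Finset.sum_congr rfl fun j _ => ?_
  ring

theorem expectation_im_eq_zero (φ : m → ℂ) {X : Matrix m m ℂ} (hX : X.IsHermitian) :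
    (star φ ⬝ᵥ X *ᵥ φ).im = 0 :=
  hX.im_star_dotProduct_mulVec_self φ

/-- Additivity of the variance of a local observable on a product of unit vectors. -/
theorem var_tensor [DecidableEq m] [DecidableEq n] (φ : m → ℂ) (χ : n → ℂ)
    (hφ : star φ ⬝ᵥ φ = 1) (hχ : star χ ⬝ᵥ χ = 1) {X : Matrix m m ℂ} {Y : Matrix n n ℂ}
    (hX : X.IsHermitian) (hY : Y.IsHermitian) :
    Var (tensorVec φ χ) (X ⊗ₖ (1 : Matrix n n ℂ) + (1 : Matrix m m ℂ) ⊗ₖ Y)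
      = Var φ X + Var χ Y := by
  have hsq : (X ⊗ₖ (1 : Matrix n n ℂ) + (1 : Matrix m m ℂ) ⊗ₖ Y) *
      (X ⊗ₖ (1 : Matrix n n ℂ) + (1 : Matrix m m ℂ) ⊗ₖ Y)
      = (X * X) ⊗ₖ (1 : Matrix n n ℂ) + X ⊗ₖ Y + X ⊗ₖ Y + (1 : Matrix m m ℂ) ⊗ₖ (Y * Y) := by
    simp only [add_mul, mul_add, ← mul_kronecker_mul, one_mul, mul_one]
    abel
  have hXi := expectation_im_eq_zero φ hX
  have hYi := expectation_im_eq_zero χ hY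
  simp only [Var, expVal, hsq, add_mulVec, dotProduct_add, tensor_expectation, one_mulVec, hφ, hχ,
    mul_one, one_mul, add_re, mul_re, hXi, hYi]
  ring

/-- Relabelling the basis, in particular permuting tensor factors, preserves the variance. -/
theorem var_comp_equiv (e : m ≃ n) (χ : n → ℂ) (M : Matrix n n ℂ) :
    Var (χ ∘ e) (M.submatrix e e) = Var χ M := by
  have key : ∀ N : Matrix n n ℂ, expVal (χ ∘ e) (N.submatrix e e) = expVal χ N := by
    intro N
    unfold expVal
    congr 1
    simp only [dotProduct, mulVec, Pi.star_apply, Function.comp_apply, submatrix_apply]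
    rw [← e.sum_comp]
    refine Finset.sum_congr rfl fun i _ => ?_
    rw [← e.sum_comp]
  unfold Var
  rw [submatrix_mul_equiv, key, key]

open scoped ComplexOrder in
/-- The factors of a unit product vector can be chosen to be unit vectors. -/
theorem exists_unit_factors (α : m → ℂ) (β : n → ℂ)
    (h : star (tensorVec α β) ⬝ᵥ tensorVec α β = 1) :
    ∃ (α' : m → ℂ) (β' : n → ℂ), star α' ⬝ᵥ α' = 1 ∧ star β' ⬝ᵥ β' = 1 ∧
      tensorVec α' β' = tensorVec α β := by
  have hnonneg : 0 ≤ star α ⬝ᵥ α := dotProduct_star_self_nonneg α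
  obtain ⟨r, hr0, hr⟩ : ∃ r : ℝ, 0 ≤ r ∧ (r : ℂ) = star α ⬝ᵥ α :=
    ⟨(star α ⬝ᵥ α).re, (Complex.le_def.1 hnonneg).1,
      Complex.ext rfl (Complex.le_def.1 hnonneg).2⟩
  rw [tensorVec_dotProduct, ← hr] at h
  have hrne : (r : ℂ) ≠ 0 := left_ne_zero_of_mul_eq_one h
  -- `s = ‖α‖`; the rescaled factors are `α / s` and `s β`.
  obtain ⟨s, hs⟩ : ∃ s : ℝ, (s : ℂ) * s = r :=
    ⟨√r, by rw [← ofReal_mul, Real.mul_self_sqrt hr0]⟩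
  have hsne : (s : ℂ) ≠ 0 := by
    rintro h0
    rw [h0, zero_mul] at hs
    exact hrne hs.symm
  have hstar : star (s : ℂ) = s := conj_ofReal s
  refine ⟨(s : ℂ)⁻¹ • α, (s : ℂ) • β, ?_, ?_, ?_⟩
  · rw [star_smul, smul_dotProduct, dotProduct_smul, ← hr, ← hs, star_inv₀, hstar]
    simp only [smul_eq_mul]
    field_simp
  · rw [star_smul, smul_dotProduct, dotProduct_smul, hstar]
    simp only [smul_eq_mul]
    rw [← mul_assoc, hs, h]
  · ext p
    simp only [tensorVec, Pi.smul_apply, smul_eq_mul]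
    field_simp

theorem isHermitian_local [DecidableEq m] [DecidableEq n] {X : Matrix m m ℂ} {Y : Matrix n n ℂ}
    (hX : X.IsHermitian) (hY : Y.IsHermitian) :
    (X ⊗ₖ (1 : Matrix n n ℂ) + (1 : Matrix m m ℂ) ⊗ₖ Y).IsHermitian := by
  unfold IsHermitian
  rw [conjTranspose_add, conjTranspose_kronecker, conjTranspose_kronecker, hX.eq, hY.eq,
    conjTranspose_one, conjTranspose_one]

/-- Bounds `f`, `g` on the total variances of the two factors add up on unit vectors that, after
the relabelling `e` of the basis, are products. -/
theorem sum_var_le_of_product {k ι : Type*} [Fintype k] [Fintype ι] [DecidableEq m]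
    [DecidableEq n] (e : k ≃ m × n) (X : ι → Matrix m m ℂ) (Y : ι → Matrix n n ℂ)
    (M : ι → Matrix k k ℂ) (hX : ∀ μ, (X μ).IsHermitian) (hY : ∀ μ, (Y μ).IsHermitian)
    (hM : ∀ μ, M μ = (X μ ⊗ₖ (1 : Matrix n n ℂ) + (1 : Matrix m m ℂ) ⊗ₖ Y μ).submatrix e e)
    {f g : ℝ} (hf : ∀ φ : m → ℂ, star φ ⬝ᵥ φ = 1 → ∑ μ, Var φ (X μ) ≤ f)
    (hg : ∀ φ : n → ℂ, star φ ⬝ᵥ φ = 1 → ∑ μ, Var φ (Y μ) ≤ g)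
    (ψ : k → ℂ) (hψ : star ψ ⬝ᵥ ψ = 1) (α : m → ℂ) (β : n → ℂ)
    (hprod : ψ = tensorVec α β ∘ e) :
    ∑ μ, Var ψ (M μ) ≤ f + g := by
  have hunit : star (tensorVec α β) ⬝ᵥ tensorVec α β = 1 := by
    rw [← hψ, hprod]
    exact (e.sum_comp fun p => star (tensorVec α β) p * tensorVec α β p).symm
  obtain ⟨α', β', hα, hβ, hαβ⟩ := exists_unit_factors α β hunit
  have hvar : ∀ μ, Var ψ (M μ) = Var α' (X μ) + Var β' (Y μ) := by
    intro μ
    rw [hM, hprod, ← hαβ, var_comp_equiv, var_tensor α' β' hα hβ (hX μ) (hY μ)]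
  simp only [hvar, Finset.sum_add_distrib]
  exact add_le_add (hf α' hα) (hg β' hβ)

end Helpers

theorem biseparable_pure_fisher_bound (d : ℕ) (hd : 2 ≤ d)
    {ι : Type*} [Fintype ι] (A B C : ι → Matrix (Fin d) (Fin d) ℂ)
    (hA : ∀ μ, (A μ).IsHermitian) (hB : ∀ μ, (B μ).IsHermitian)
    (hC : ∀ μ, (C μ).IsHermitian)
    (F₁ F₂ : ℝ)
    (hF1A : ∀ φ : Fin d → ℂ, star φ ⬝ᵥ φ = 1 → ∑ μ, Var φ (A μ) ≤ F₁)
    (hF1B : ∀ φ : Fin d → ℂ, star φ ⬝ᵥ φ = 1 → ∑ μ, Var φ (B μ) ≤ F₁)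
    (hF1C : ∀ φ : Fin d → ℂ, star φ ⬝ᵥ φ = 1 → ∑ μ, Var φ (C μ) ≤ F₁)
    (hF2AB : ∀ φ : Fin d × Fin d → ℂ, star φ ⬝ᵥ φ = 1 →
      ∑ μ, Var φ (A μ ⊗ₖ (1 : Matrix (Fin d) (Fin d) ℂ) +
                  (1 : Matrix (Fin d) (Fin d) ℂ) ⊗ₖ B μ) ≤ F₂)
    (hF2AC : ∀ φ : Fin d × Fin d → ℂ, star φ ⬝ᵥ φ = 1 →
      ∑ μ, Var φ (A μ ⊗ₖ (1 : Matrix (Fin d) (Fin d) ℂ) +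
                  (1 : Matrix (Fin d) (Fin d) ℂ) ⊗ₖ C μ) ≤ F₂)
    (hF2BC : ∀ φ : Fin d × Fin d → ℂ, star φ ⬝ᵥ φ = 1 →
      ∑ μ, Var φ (B μ ⊗ₖ (1 : Matrix (Fin d) (Fin d) ℂ) +
                  (1 : Matrix (Fin d) (Fin d) ℂ) ⊗ₖ C μ) ≤ F₂)
    (ψ : Fin d × Fin d × Fin d → ℂ) (hψ : star ψ ⬝ᵥ ψ = 1)
    (hsep : PureBiseparable ψ) :
    ∑ μ, Var ψ
        (A μ ⊗ₖ ((1 : Matrix (Fin d) (Fin d) ℂ) ⊗ₖ (1 : Matrix (Fin d) (Fin d) ℂ)) +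
         (1 : Matrix (Fin d) (Fin d) ℂ) ⊗ₖ (B μ ⊗ₖ (1 : Matrix (Fin d) (Fin d) ℂ)) +
         (1 : Matrix (Fin d) (Fin d) ℂ) ⊗ₖ ((1 : Matrix (Fin d) (Fin d) ℂ) ⊗ₖ C μ)) ≤
      F₁ + F₂ := by
  rcases hsep with ⟨α, β, h⟩ | ⟨β, γ, h⟩ | ⟨α, γ, h⟩
  · refine sum_var_le_of_product (Equiv.refl _) A
      (fun μ => B μ ⊗ₖ (1 : Matrix (Fin d) (Fin d) ℂ) + (1 : Matrix (Fin d) (Fin d) ℂ) ⊗ₖ C μ)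
      _ hA (fun μ => isHermitian_local (hB μ) (hC μ)) (fun μ => ?_) hF1A hF2BC ψ hψ α β (funext h)
    simp [kronecker_add, add_assoc]
  · -- The relabelling `(a, b, c) ↦ (b, (a, c))` brings party `b` to the front.
    let e : Fin d × Fin d × Fin d ≃ Fin d × (Fin d × Fin d) :=
      ⟨fun p => (p.2.1, (p.1, p.2.2)), fun p => (p.2.1, (p.1, p.2.2)), fun _ => rfl, fun _ => rfl⟩
    refine sum_var_le_of_product e B
      (fun μ => A μ ⊗ₖ (1 : Matrix (Fin d) (Fin d) ℂ) + (1 : Matrix (Fin d) (Fin d) ℂ) ⊗ₖ C μ)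
      _ hB (fun μ => isHermitian_local (hA μ) (hC μ)) (fun μ => ?_) hF1B hF2AC ψ hψ β γ (funext h)
    rw [← one_kronecker_one (m := Fin d) (n := Fin d)]
    ext ⟨a, b, c⟩ ⟨a', b', c'⟩
    simp only [e, Equiv.coe_fn_mk, submatrix_apply, Matrix.add_apply, kroneckerMap_apply]
    ring
  · rw [add_comm F₁ F₂]
    refine sum_var_le_of_product (Equiv.prodAssoc _ _ _).symm
      (fun μ => A μ ⊗ₖ (1 : Matrix (Fin d) (Fin d) ℂ) + (1 : Matrix (Fin d) (Fin d) ℂ) ⊗ₖ B μ) C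
      _ (fun μ => isHermitian_local (hA μ) (hB μ)) hC (fun μ => ?_) hF2AB hF1C ψ hψ α γ (funext h)
    rw [← one_kronecker_one (m := Fin d) (n := Fin d)]
    ext ⟨a, b, c⟩ ⟨a', b', c'⟩
    simp only [Equiv.prodAssoc_symm_apply, submatrix_apply, Matrix.add_apply, kroneckerMap_apply]
    ring
end

section
/- (Pure-state version of Corollary 2.) Every unit vector ψ ∈ ℂ²⊗ℂ²⊗ℂ² that factors as a tensor product across some bipartition of the three subsystems satisfies Σ_{i=1}^{3} Var_ψ(σᵢ⊗I⊗I + I⊗σᵢ⊗I + I⊗I⊗σᵢ) ≤ 10. -/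
/-!
The bound is invariant under permuting the three qubits, so `ψ = α ⊗ β` with `α` a single qubit and
`β` a pair may be assumed. Writing `coll3 X = X ⊗ 1 + 1 ⊗ coll2 X`, the variance is additive over the
two factors. The qubit contributes `3 - |r|² = 2`, because its Bloch vector `r` has length one
(`sum_expVal_pauli_sq`). The pair contributes at most `∑ ⟨(coll2 σᵢ)²⟩ ≤ 8`
(`sum_expVal_coll2_sq_le`): the operator `∑ (coll2 σᵢ)²` equals `8` minus eight times the projection
onto the singlet. The factors `α` and `β` need not be normalized separately, so the lemmas carry the
squared norms `a`, `b` of `α`, `β`, with `a * b = 1`.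
-/

open Matrix Complex
open scoped Matrix Kronecker

/-- Collective (one-body) operator X⊗I⊗I + I⊗X⊗I + I⊗I⊗X on three qubits. -/
noncomputable def coll3 (X : Matrix (Fin 2) (Fin 2) ℂ) :
    Matrix (Fin 2 × Fin 2 × Fin 2) (Fin 2 × Fin 2 × Fin 2) ℂ :=
  X ⊗ₖ ((1 : Matrix (Fin 2) (Fin 2) ℂ) ⊗ₖ (1 : Matrix (Fin 2) (Fin 2) ℂ)) +
  (1 : Matrix (Fin 2) (Fin 2) ℂ) ⊗ₖ (X ⊗ₖ (1 : Matrix (Fin 2) (Fin 2) ℂ)) +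
  (1 : Matrix (Fin 2) (Fin 2) ℂ) ⊗ₖ ((1 : Matrix (Fin 2) (Fin 2) ℂ) ⊗ₖ X)

/-- The collective operator `X ⊗ 1 + 1 ⊗ X` on two qubits. -/
noncomputable def coll2 (X : Matrix (Fin 2) (Fin 2) ℂ) :
    Matrix (Fin 2 × Fin 2) (Fin 2 × Fin 2) ℂ :=
  X ⊗ₖ (1 : Matrix (Fin 2) (Fin 2) ℂ) + (1 : Matrix (Fin 2) (Fin 2) ℂ) ⊗ₖ X

lemma expVal_add {n : Type*} [Fintype n] (ψ : n → ℂ) (A B : Matrix n n ℂ) :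
    expVal ψ (A + B) = expVal ψ A + expVal ψ B := by
  simp [expVal, Matrix.add_mulVec, dotProduct_add]

lemma expVal_kronecker {m n : Type*} [Fintype m] [Fintype n] (α : m → ℂ) (β : n → ℂ)
    {A : Matrix m m ℂ} (hA : A.IsHermitian) (B : Matrix n n ℂ) :
    expVal (fun p : m × n => α p.1 * β p.2) (A ⊗ₖ B) = expVal α A * expVal β B := by
  have h : star (fun p : m × n => α p.1 * β p.2) ⬝ᵥ
      (A ⊗ₖ B).mulVec (fun p : m × n => α p.1 * β p.2)
      = (star α ⬝ᵥ A.mulVec α) * (star β ⬝ᵥ B.mulVec β) := by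
    have hm : (A ⊗ₖ B).mulVec (fun p : m × n => α p.1 * β p.2)
        = fun p => A.mulVec α p.1 * B.mulVec β p.2 := by
      ext p
      simp only [mulVec, dotProduct, Fintype.sum_prod_type, Finset.sum_mul_sum,
        kroneckerMap_apply, mul_mul_mul_comm]
    simp only [hm, dotProduct, Fintype.sum_prod_type, Finset.sum_mul_sum, Pi.star_apply,
      star_mul', mul_mul_mul_comm]
  have him : (star α ⬝ᵥ A.mulVec α).im = 0 := hA.im_star_dotProduct_mulVec_self α
  rw [expVal, h, Complex.mul_re, him]
  simp [expVal]

lemma expVal_submatrix {m n : Type*} [Fintype m] [Fintype n] (e : m ≃ n) (ψ : n → ℂ)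
    (A : Matrix n n ℂ) : expVal (ψ ∘ e) (A.submatrix e e) = expVal ψ A := by
  simp only [expVal, dotProduct, mulVec, submatrix_apply, Pi.star_apply, Function.comp_apply]
  congr 1
  rw [← e.sum_comp (fun i => star (ψ i) * ∑ j, A i j * ψ j)]
  refine Finset.sum_congr rfl fun i _ => ?_
  rw [← e.sum_comp (fun j => A (e i) j * ψ j)]

lemma var_submatrix {m n : Type*} [Fintype m] [Fintype n] (e : m ≃ n) (ψ : n → ℂ)
    (A : Matrix n n ℂ) : Var (ψ ∘ e) (A.submatrix e e) = Var ψ A := by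
  rw [Var, Var, submatrix_mul_equiv, expVal_submatrix, expVal_submatrix]

lemma pauli_isHermitian (i : Fin 3) : (pauli i).IsHermitian := by
  fin_cases i <;> ext j k <;> fin_cases j <;> fin_cases k <;> simp [pauli]

lemma pauli_mul_self (i : Fin 3) : pauli i * pauli i = 1 := by
  fin_cases i <;> ext j k <;> fin_cases j <;> fin_cases k <;> simp [pauli]

/-- The Bloch vector of a pure qubit state has maximal length. -/
lemma sum_expVal_pauli_sq (α : Fin 2 → ℂ) :
    ∑ i, expVal α (pauli i) ^ 2 = expVal α 1 ^ 2 := by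
  simp [expVal, pauli, Fin.sum_univ_three, dotProduct, mulVec, Fin.sum_univ_two]
  ring

/-- The defect in the inequality is `4 * |β₀₁ - β₁₀|²`, eight times the weight of `β` on the singlet. -/
lemma sum_expVal_coll2_sq_le (β : Fin 2 × Fin 2 → ℂ) :
    ∑ i, expVal β (coll2 (pauli i) * coll2 (pauli i)) ≤ 8 * expVal β 1 := by
  have h (i : Fin 3) : coll2 (pauli i) * coll2 (pauli i)
      = 1 + 1 + (pauli i ⊗ₖ pauli i + pauli i ⊗ₖ pauli i) := by
    simp only [coll2, add_mul, mul_add, ← mul_kronecker_mul, pauli_mul_self, mul_one, one_mul,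
      one_kronecker_one]
    abel
  simp only [h, expVal_add]
  simp [expVal, pauli, Fin.sum_univ_three, dotProduct, mulVec, Fintype.sum_prod_type,
    Fin.sum_univ_two, one_apply]
  nlinarith [sq_nonneg ((β (0, 1)).re - (β (1, 0)).re),
    sq_nonneg ((β (0, 1)).im - (β (1, 0)).im)]

lemma coll3_eq (X : Matrix (Fin 2) (Fin 2) ℂ) :
    coll3 X = X ⊗ₖ (1 : Matrix (Fin 2 × Fin 2) (Fin 2 × Fin 2) ℂ)
      + (1 : Matrix (Fin 2) (Fin 2) ℂ) ⊗ₖ coll2 X := by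
  rw [coll3, coll2, kronecker_add, one_kronecker_one, add_assoc]

lemma bound_of_product (α : Fin 2 → ℂ) (β : Fin 2 × Fin 2 → ℂ)
    (h1 : expVal (fun p : Fin 2 × Fin 2 × Fin 2 => α p.1 * β p.2) 1 = 1) :
    ∑ i : Fin 3, Var (fun p : Fin 2 × Fin 2 × Fin 2 => α p.1 * β p.2) (coll3 (pauli i)) ≤ 10 := by
  have h1H : (1 : Matrix (Fin 2) (Fin 2) ℂ).IsHermitian := isHermitian_one
  have hab : expVal α 1 * expVal β 1 = 1 := by
    rw [← expVal_kronecker α β h1H, one_kronecker_one, h1]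
  have hVar (i : Fin 3) :
      Var (fun p : Fin 2 × Fin 2 × Fin 2 => α p.1 * β p.2) (coll3 (pauli i))
        = 1 + expVal α 1 * expVal β (coll2 (pauli i) * coll2 (pauli i))
          - expVal β 1 ^ 2 * expVal α (pauli i) ^ 2
          - expVal α 1 ^ 2 * expVal β (coll2 (pauli i)) ^ 2 := by
    simp only [Var, coll3_eq, add_mul, mul_add, ← mul_kronecker_mul, pauli_mul_self, mul_one,
      one_mul, expVal_add, expVal_kronecker α β h1H,
      expVal_kronecker α β (pauli_isHermitian i)]
    -- The covariance of the two summands vanishes because `a * b = 1`.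
    linear_combination (1 - 2 * expVal α (pauli i) * expVal β (coll2 (pauli i))) * hab
  have ha : 0 ≤ expVal α 1 := by
    simp [expVal, dotProduct, Fin.sum_univ_two]
    nlinarith [sq_nonneg (α 0).re, sq_nonneg (α 0).im, sq_nonneg (α 1).re, sq_nonneg (α 1).im]
  have hs : 0 ≤ expVal α 1 ^ 2 * ∑ i, expVal β (coll2 (pauli i)) ^ 2 := by positivity
  have hr : expVal β 1 ^ 2 * ∑ i, expVal α (pauli i) ^ 2 = 1 := by
    rw [sum_expVal_pauli_sq, ← mul_pow, mul_comm, hab, one_pow]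
  have hq := mul_le_mul_of_nonneg_left (sum_expVal_coll2_sq_le β) ha
  have hq' : expVal α 1 * (8 * expVal β 1) = 8 := by linear_combination 8 * hab
  simp only [hVar, Finset.sum_sub_distrib, Finset.sum_add_distrib, ← Finset.mul_sum]
  simp only [Finset.sum_const, Finset.card_univ, Fintype.card_fin, nsmul_eq_mul]
  norm_num
  linarith

/-- Reduction to `bound_of_product` along a permutation `e` of the qubits, which leaves every
collective operator unchanged. -/
lemma bound_of_perm (e : Fin 2 × Fin 2 × Fin 2 ≃ Fin 2 × Fin 2 × Fin 2)
    (he : ∀ X, (coll3 X).submatrix e e = coll3 X)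
    (ψ : Fin 2 × Fin 2 × Fin 2 → ℂ) (hψ : star ψ ⬝ᵥ ψ = 1)
    (α : Fin 2 → ℂ) (β : Fin 2 × Fin 2 → ℂ) (h : ∀ p, ψ (e p) = α p.1 * β p.2) :
    ∑ i : Fin 3, Var ψ (coll3 (pauli i)) ≤ 10 := by
  have hf : ψ ∘ e = fun p => α p.1 * β p.2 := funext h
  have h1 : expVal ψ 1 = 1 := by simp [expVal, hψ]
  rw [← expVal_submatrix e, submatrix_one_equiv, hf] at h1
  have := bound_of_product α β h1
  rw [← hf] at this
  simpa only [← var_submatrix e ψ, he] using this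

/-- The exchange of the first two tensor factors. -/
def swap12 : Fin 2 × Fin 2 × Fin 2 ≃ Fin 2 × Fin 2 × Fin 2 where
  toFun p := (p.2.1, p.1, p.2.2)
  invFun p := (p.2.1, p.1, p.2.2)
  left_inv _ := rfl
  right_inv _ := rfl

/-- The exchange of the outer two tensor factors. -/
def swap13 : Fin 2 × Fin 2 × Fin 2 ≃ Fin 2 × Fin 2 × Fin 2 where
  toFun p := (p.2.2, p.2.1, p.1)
  invFun p := (p.2.2, p.2.1, p.1)
  left_inv _ := rfl
  right_inv _ := rfl

theorem biseparable_pure_pauli_bound (ψ : Fin 2 × Fin 2 × Fin 2 → ℂ)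
    (hψ : star ψ ⬝ᵥ ψ = 1) (hsep : PureBiseparable ψ) :
    ∑ i : Fin 3, Var ψ (coll3 (pauli i)) ≤ 10 := by
  rcases hsep with ⟨α, β, h⟩ | ⟨β, γ, h⟩ | ⟨α, γ, h⟩
  · exact bound_of_perm (Equiv.refl _) (fun X => rfl) ψ hψ α β h
  · refine bound_of_perm swap12 (fun X => ?_) ψ hψ β γ fun p => h _
    ext p q
    simp only [coll3, swap12, submatrix_apply, Matrix.add_apply, kroneckerMap_apply,
      Equiv.coe_fn_mk]
    ring
  · refine bound_of_perm swap13 (fun X => ?_) ψ hψ γ (fun q => α (q.2, q.1)) fun p => ?_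
    · ext p q
      simp only [coll3, swap13, submatrix_apply, Matrix.add_apply, kroneckerMap_apply,
        Equiv.coe_fn_mk]
      ring
    · rw [h, mul_comm]
      rfl
end
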